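/- Fix 1 < p < ∞, λ > 0, κ ≤ 0, and a ∈ ℝ. Then there exists exactly one function w : ℝ → ℝ such that: w is C¹ on ℝ; the map t ↦ |w′(t)|^{p-2} w′(t) is C¹ on ℝ; for every t ∈ ℝ the map t ↦ e^{-κ t²/2} |w′(t)|^{p-2} w′(t) has derivative equal to -λ e^{-κ t²/2} |w(t)|^{p-2} w(t); and w(a) = -1, w′(a) = 0. -/

import Mathlib

/-- The odd power function `sgnPow q x = sign x * |x| ^ q` (with value `0` at `0`);
for `q = p - 1` this is the function usually written `|x|^{p-2} x`. -/
noncomputable def sgnPow (q x : ℝ) : ℝ := Real.sign x * |x| ^ q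

/-- `w` solves the one-dimensional model IVP: `w` is `C¹` on `ℝ`, the map
`t ↦ |w'(t)|^{p-2} w'(t)` is `C¹` on `ℝ`, the divergence-form equation
`(e^{-κ t²/2} |w'|^{p-2} w')' = -λ e^{-κ t²/2} |w|^{p-2} w` holds at every `t ∈ ℝ`,
and `w a = -1`, `w' a = 0`. -/
def IsModelSolution (p lam κ a : ℝ) (w : ℝ → ℝ) : Prop :=
  ContDiff ℝ 1 w ∧
  ContDiff ℝ 1 (fun t => sgnPow (p - 1) (deriv w t)) ∧
  (∀ t : ℝ, HasDerivAt (fun s => Real.exp (-κ * s ^ 2 / 2) * sgnPow (p - 1) (deriv w s))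
      (-lam * (Real.exp (-κ * t ^ 2 / 2) * sgnPow (p - 1) (w t))) t) ∧
  w a = -1 ∧ deriv w a = 0

/-!
In terms of `w` and its flux `y = ρ |w'|^{p-2} w'`, `ρ = e^{-κ t²/2}`, the equation is a planar
half-linear system `x' = f |y|^{1/q-1} y`, `y' = g |x|^{q-1} x` with `q = p - 1` and continuous
nonvanishing `f`, `g`, whose right-hand side is not locally Lipschitz where the smaller of the two
powers acts on `0`. By Grönwall's inequality the energy `|x|^{q+1} + |y|^{1/q+1}` grows at most by a
locally bounded factor, in both time directions. Existence follows from Peano's theorem, since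
clipping the vector field above the a priori bound does not affect the solution.

For uniqueness, the energy estimate keeps nontrivial solutions away from the origin, so where `y`
vanishes `x` does not, and `y` crosses `0` with nonzero speed `m`. Two solutions through such a
point satisfy `yᵢ = (t - t₀) sᵢ` with `sᵢ → m`, and by homogeneity the difference of the singular
terms is controlled by that of the slopes `s₁ - s₂`, hence by `sup |x₁ - x₂|`: a contraction near
`t₀`. The case where `x` vanishes is symmetric.
-/

open Set Filter Topology Metric Asymptotics
open scoped NNReal

section SgnPow

variable {q : ℝ}

lemma sgnPow_eq_abs_rpow_mul (q x : ℝ) : sgnPow q x = |x| ^ (q - 1) * x := by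
  rcases lt_trichotomy x 0 with hx | rfl | hx
  · rw [sgnPow, Real.sign_of_neg hx, Real.rpow_sub_one (abs_pos.2 hx.ne).ne', abs_of_neg hx]
    field_simp [hx.ne]
  · simp [sgnPow]
  · rw [sgnPow, Real.sign_of_pos hx, Real.rpow_sub_one (abs_pos.2 hx.ne').ne', abs_of_pos hx]
    field_simp

lemma sgnPow_zero (q : ℝ) : sgnPow q 0 = 0 := by simp [sgnPow]

lemma sgnPow_mul (q x y : ℝ) : sgnPow q (x * y) = sgnPow q x * sgnPow q y := by
  simp only [sgnPow_eq_abs_rpow_mul, abs_mul, Real.mul_rpow (abs_nonneg x) (abs_nonneg y)]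
  ring

lemma abs_sgnPow (hq : q ≠ 0) (x : ℝ) : |sgnPow q x| = |x| ^ q := by
  rcases eq_or_ne x 0 with rfl | hx
  · simp [sgnPow_zero, Real.zero_rpow hq]
  · rw [sgnPow_eq_abs_rpow_mul, abs_mul, abs_of_nonneg (by positivity),
      Real.rpow_sub_one (abs_pos.2 hx).ne', div_mul_cancel₀ _ (abs_pos.2 hx).ne']

lemma abs_mul_sgnPow_le (hq : 0 < q) {x r : ℝ} (hx : |x| ≤ r) (c : ℝ) :
    |c * sgnPow q x| ≤ |c| * r ^ q := by
  rw [abs_mul, abs_sgnPow hq.ne']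
  gcongr

lemma sgnPow_ne_zero (hq : q ≠ 0) {x : ℝ} (hx : x ≠ 0) : sgnPow q x ≠ 0 := by
  rw [← abs_pos, abs_sgnPow hq]
  positivity

lemma sgnPow_sgnPow_inv (hq : q ≠ 0) (x : ℝ) : sgnPow q (sgnPow q⁻¹ x) = x := by
  have hexp : q⁻¹ * (q - 1) + (q⁻¹ - 1) = 0 := by field_simp; ring
  rcases eq_or_ne x 0 with rfl | hx
  · simp only [sgnPow_zero]
  · rw [sgnPow_eq_abs_rpow_mul, abs_sgnPow (inv_ne_zero hq), sgnPow_eq_abs_rpow_mul, ← mul_assoc,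
      ← Real.rpow_mul (abs_nonneg x), ← Real.rpow_add (abs_pos.2 hx), hexp, Real.rpow_zero, one_mul]

lemma hasDerivAt_abs_rpow_add_one (hq : 0 < q) (x : ℝ) :
    HasDerivAt (fun x : ℝ => |x| ^ (q + 1)) ((q + 1) * sgnPow q x) x := by
  convert hasDerivAt_abs_rpow x (lt_add_of_pos_left 1 hq) using 1
  rw [sgnPow_eq_abs_rpow_mul]
  ring_nf

lemma continuous_sgnPow (hq : 0 < q) : Continuous (sgnPow q) := by
  have hdiff : ContDiff ℝ 1 fun x : ℝ => ‖x‖ ^ (q + 1) := contDiff_norm_rpow (by linarith)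
  have hderiv : deriv (fun x : ℝ => ‖x‖ ^ (q + 1)) = fun x => (q + 1) * sgnPow q x :=
    funext fun x => (hasDerivAt_abs_rpow_add_one hq x).deriv
  have hcont := hdiff.continuous_deriv_one.const_mul (q + 1)⁻¹
  simpa only [hderiv, inv_mul_cancel_left₀ (by positivity : q + 1 ≠ 0)] using hcont

lemma contDiffAt_sgnPow (q : ℝ) {x : ℝ} (hx : x ≠ 0) : ContDiffAt ℝ 1 (sgnPow q) x := by
  rw [funext (sgnPow_eq_abs_rpow_mul q)]
  exact ((contDiffAt_abs hx).rpow_const_of_ne (abs_ne_zero.2 hx)).mul contDiffAt_id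

end SgnPow

section Gronwall

variable {N N' k : ℝ → ℝ} {t₀ t : ℝ}

lemma hasDerivAt_exp_integral_mul (hk : Continuous k) (hN : HasDerivAt N (N' t) t) (t₀ : ℝ) :
    HasDerivAt (fun t => Real.exp (∫ s in t₀..t, k s) * N t)
      (Real.exp (∫ s in t₀..t, k s) * (k t * N t + N' t)) t := by
  refine ((hk.integral_hasStrictDerivAt t₀ t).hasDerivAt.exp.mul hN).congr_deriv ?_
  ring

/-- The classical Grönwall factor is `exp (∫ s in t₀..t, k s)` for `t₀ ≤ t`; the absolute value
covers both time directions. -/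
theorem le_exp_abs_integral_mul_of_abs_hasDerivAt_le (hk : Continuous k)
    (hN : ∀ t, HasDerivAt N (N' t) t) (hN' : ∀ t, |N' t| ≤ k t * N t) (hN₀ : 0 ≤ N t₀) (t : ℝ) :
    N t ≤ Real.exp |∫ s in t₀..t, k s| * N t₀ := by
  have hmono : Monotone fun t => Real.exp (∫ s in t₀..t, k s) * N t :=
    monotone_of_hasDerivAt_nonneg (fun t => hasDerivAt_exp_integral_mul hk (hN t) t₀) fun t =>
      mul_nonneg (Real.exp_pos _).le (by linarith [neg_le_of_abs_le (hN' t)])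
  have hanti : Antitone fun t => Real.exp (∫ s in t₀..t, -k s) * N t :=
    antitone_of_hasDerivAt_nonpos
      (fun t => hasDerivAt_exp_integral_mul (k := fun s => -k s) hk.neg (hN t) t₀) fun t =>
      mul_nonpos_of_nonneg_of_nonpos (Real.exp_pos _).le (by linarith [le_of_abs_le (hN' t)])
  have hle : ∀ r, Real.exp (-r) * N t ≤ N t₀ → N t ≤ Real.exp r * N t₀ := fun r h => by
    rwa [Real.exp_neg, inv_mul_le_iff₀ (Real.exp_pos r)] at h
  rcases le_total t₀ t with ht | ht
  · refine (hle _ ?_).trans (mul_le_mul_of_nonneg_right (Real.exp_le_exp.2 (le_abs_self _)) hN₀)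
    simpa using hanti ht
  · refine (hle _ ?_).trans (mul_le_mul_of_nonneg_right (Real.exp_le_exp.2 (neg_le_abs _)) hN₀)
    simpa using hmono ht

end Gronwall

section HalfLinearSystem

variable {q : ℝ} {f g x y : ℝ → ℝ} {t₀ : ℝ}

/-- `(x, y)` is a global solution of the half-linear system `x' = f |y|^(1/q-1) y`,
`y' = g |x|^(q-1) x`. The second-order equation `(r |x'|^(q-1) x')' = g |x|^(q-1) x` takes this
form in terms of `x` and its flux `y = r |x'|^(q-1) x'`. -/
def IsHalfLinearSolution (q : ℝ) (f g x y : ℝ → ℝ) : Prop :=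
  ∀ t, HasDerivAt x (f t * sgnPow q⁻¹ (y t)) t ∧ HasDerivAt y (g t * sgnPow q (x t)) t

namespace IsHalfLinearSolution

lemma continuous_fst (h : IsHalfLinearSolution q f g x y) : Continuous x :=
  continuous_iff_continuousAt.2 fun t => (h t).1.continuousAt

lemma continuous_snd (h : IsHalfLinearSolution q f g x y) : Continuous y :=
  continuous_iff_continuousAt.2 fun t => (h t).2.continuousAt

lemma swap (h : IsHalfLinearSolution q f g x y) : IsHalfLinearSolution q⁻¹ g f y x := fun t => by
  rw [inv_inv]
  exact (h t).symm

end IsHalfLinearSolution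

/-- The energy `|x|^(q+1) + |y|^(1/q+1)` of a state of the half-linear system, whose time
derivative is controlled by the energy itself. -/
noncomputable def halfLinearEnergy (q x y : ℝ) : ℝ := |x| ^ (q + 1) + |y| ^ (q⁻¹ + 1)

lemma halfLinearEnergy_nonneg (q x y : ℝ) : 0 ≤ halfLinearEnergy q x y := by
  unfold halfLinearEnergy
  positivity

lemma halfLinearEnergy_eq_zero (hq : 0 < q) {x y : ℝ} :
    halfLinearEnergy q x y = 0 ↔ x = 0 ∧ y = 0 := by
  have hq₁ : q + 1 ≠ 0 := by positivity
  have hq₂ : q⁻¹ + 1 ≠ 0 := by positivity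
  rw [halfLinearEnergy, add_eq_zero_iff_of_nonneg (by positivity) (by positivity),
    Real.rpow_eq_zero (abs_nonneg x) hq₁, Real.rpow_eq_zero (abs_nonneg y) hq₂, abs_eq_zero,
    abs_eq_zero]

lemma le_one_add_rpow {a s : ℝ} (ha : 0 ≤ a) (hs : 1 ≤ s) : a ≤ 1 + a ^ s := by
  rcases le_total a 1 with h | h
  · exact h.trans (le_add_of_nonneg_right (Real.rpow_nonneg ha s))
  · exact (Real.self_le_rpow_of_one_le h hs).trans (le_add_of_nonneg_left zero_le_one)

lemma abs_fst_le_one_add_halfLinearEnergy (hq : 0 < q) (x y : ℝ) :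
    |x| ≤ 1 + halfLinearEnergy q x y := by
  have hx := le_one_add_rpow (abs_nonneg x) (le_add_of_nonneg_left hq.le)
  have hy : 0 ≤ |y| ^ (q⁻¹ + 1) := by positivity
  rw [halfLinearEnergy]
  linarith

lemma abs_snd_le_one_add_halfLinearEnergy (hq : 0 < q) (x y : ℝ) :
    |y| ≤ 1 + halfLinearEnergy q x y := by
  have hy := le_one_add_rpow (abs_nonneg y) (le_add_of_nonneg_left (inv_pos.2 hq).le)
  have hx : 0 ≤ |x| ^ (q + 1) := by positivity
  rw [halfLinearEnergy]
  linarith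

lemma abs_rpow_mul_abs_rpow_inv_le_halfLinearEnergy (hq : 0 < q) (x y : ℝ) :
    |x| ^ q * |y| ^ q⁻¹ ≤ halfLinearEnergy q x y := by
  have hxq : 0 ≤ |x| ^ q := by positivity
  have hyq : 0 ≤ |y| ^ q⁻¹ := by positivity
  rw [halfLinearEnergy, Real.rpow_add_one' (abs_nonneg x) (by positivity),
    Real.rpow_add_one' (abs_nonneg y) (by positivity)]
  rcases le_total (|y| ^ q⁻¹) |x| with h | h
  · exact (mul_le_mul_of_nonneg_left h hxq).trans (le_add_of_nonneg_right (by positivity))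
  · rw [Real.le_rpow_inv_iff_of_pos (abs_nonneg x) (abs_nonneg y) hq] at h
    rw [mul_comm]
    exact (mul_le_mul_of_nonneg_left h hyq).trans (le_add_of_nonneg_left (by positivity))

/-- The Grönwall factor, from time `t₀` to time `t`, of `halfLinearEnergy` along solutions with
coefficients `f` and `g`. -/
noncomputable def halfLinearGrowth (q : ℝ) (f g : ℝ → ℝ) (t₀ t : ℝ) : ℝ :=
  Real.exp |∫ s in t₀..t, ((q + 1) * |f s| + (q⁻¹ + 1) * |g s|)|

lemma continuous_halfLinearGrowth (hf : Continuous f) (hg : Continuous g) (q t₀ : ℝ) :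
    Continuous (halfLinearGrowth q f g t₀) := by
  have hcont : Continuous fun s => (q + 1) * |f s| + (q⁻¹ + 1) * |g s| := by fun_prop
  exact Real.continuous_exp.comp
    (intervalIntegral.continuous_primitive (fun a b => hcont.intervalIntegrable a b) t₀).abs

theorem halfLinearEnergy_le (hq : 0 < q) (hf : Continuous f) (hg : Continuous g) {x' y' : ℝ → ℝ}
    (hx : ∀ t, HasDerivAt x (x' t) t) (hy : ∀ t, HasDerivAt y (y' t) t)
    (hx' : ∀ t, |x' t| ≤ |f t| * |y t| ^ q⁻¹) (hy' : ∀ t, |y' t| ≤ |g t| * |x t| ^ q) (t₀ t : ℝ) :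
    halfLinearEnergy q (x t) (y t) ≤
      halfLinearGrowth q f g t₀ t * halfLinearEnergy q (x t₀) (y t₀) := by
  refine le_exp_abs_integral_mul_of_abs_hasDerivAt_le (by fun_prop)
    (N := fun t => halfLinearEnergy q (x t) (y t))
    (fun t => ((hasDerivAt_abs_rpow_add_one hq (x t)).comp t (hx t)).add
      ((hasDerivAt_abs_rpow_add_one (inv_pos.2 hq) (y t)).comp t (hy t)))
    (fun t => ?_) (halfLinearEnergy_nonneg _ _ _) t
  have hx_le : |(q + 1) * sgnPow q (x t) * x' t| ≤
      (q + 1) * |x t| ^ q * (|f t| * |y t| ^ q⁻¹) := by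
    rw [abs_mul, abs_mul, abs_sgnPow hq.ne', abs_of_pos (by positivity : 0 < q + 1)]
    gcongr
    exact hx' t
  have hy_le : |(q⁻¹ + 1) * sgnPow q⁻¹ (y t) * y' t| ≤
      (q⁻¹ + 1) * |y t| ^ q⁻¹ * (|g t| * |x t| ^ q) := by
    rw [abs_mul, abs_mul, abs_sgnPow (inv_ne_zero hq.ne'), abs_of_pos (by positivity : 0 < q⁻¹ + 1)]
    gcongr
    exact hy' t
  calc |(q + 1) * sgnPow q (x t) * x' t + (q⁻¹ + 1) * sgnPow q⁻¹ (y t) * y' t|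
      ≤ (q + 1) * |x t| ^ q * (|f t| * |y t| ^ q⁻¹) +
          (q⁻¹ + 1) * |y t| ^ q⁻¹ * (|g t| * |x t| ^ q) :=
        (abs_add_le _ _).trans (add_le_add hx_le hy_le)
    _ = ((q + 1) * |f t| + (q⁻¹ + 1) * |g t|) * (|x t| ^ q * |y t| ^ q⁻¹) := by ring
    _ ≤ ((q + 1) * |f t| + (q⁻¹ + 1) * |g t|) * halfLinearEnergy q (x t) (y t) := by
        gcongr
        exact abs_rpow_mul_abs_rpow_inv_le_halfLinearEnergy hq (x t) (y t)

lemma IsHalfLinearSolution.ne_zero_or_ne_zero (h : IsHalfLinearSolution q f g x y) (hq : 0 < q)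
    (hf : Continuous f) (hg : Continuous g) (h₀ : x t₀ ≠ 0 ∨ y t₀ ≠ 0) (t : ℝ) :
    x t ≠ 0 ∨ y t ≠ 0 := by
  rw [← not_and_or, ← halfLinearEnergy_eq_zero hq] at h₀ ⊢
  refine fun ht => h₀ (le_antisymm ?_ (halfLinearEnergy_nonneg _ _ _))
  have hle := halfLinearEnergy_le hq hf hg (fun t => (h t).1) (fun t => (h t).2)
    (fun t => abs_mul_sgnPow_le (inv_pos.2 hq) le_rfl (f t))
    (fun t => abs_mul_sgnPow_le hq le_rfl (g t)) t t₀
  rwa [ht, mul_zero] at hle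

end HalfLinearSystem

section SingularUniqueness

variable {E F : Type*} [NormedAddCommGroup E] [NormedSpace ℝ E] [NormedAddCommGroup F]
  [NormedSpace ℝ F] {X X' : ℝ → E} {Y Y' : ℝ → F} {t₀ : ℝ}

lemma norm_le_mul_of_norm_hasDerivAt_le {s : Set ℝ} {C t : ℝ} (hs : Convex ℝ s)
    (hX : ∀ t ∈ s, HasDerivAt X (X' t) t) (hX' : ∀ t ∈ s, ‖X' t‖ ≤ C) (hX₀ : X t₀ = 0)
    (ht₀ : t₀ ∈ s) (ht : t ∈ s) : ‖X t‖ ≤ C * |t - t₀| := by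
  simpa [hX₀] using hs.norm_image_sub_le_of_norm_hasDerivWithin_le
    (fun t ht => (hX t ht).hasDerivWithinAt) hX' ht₀ ht

lemma norm_slope_le {C t : ℝ} (hX₀ : X t₀ = 0) (hC : 0 ≤ C) (hX : ‖X t‖ ≤ C * |t - t₀|) :
    ‖slope X t₀ t‖ ≤ C := by
  rw [slope_def_module, hX₀, sub_zero, norm_smul, norm_inv, Real.norm_eq_abs]
  exact inv_mul_le_of_le_mul₀ (abs_nonneg _) hC (by rwa [mul_comm])

/-- If `D` is the maximum of `‖X‖` on a ball of radius `δ`, then `Y = O(D |t - t₀|)` there, hence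
`X' = O(D)` and `D = O(D δ)`; for small `δ` this forces `D = 0`. -/
theorem eventually_eq_zero_of_deriv_isBigO_slope (hX : ∀ᶠ t in 𝓝 t₀, HasDerivAt X (X' t) t)
    (hY : ∀ᶠ t in 𝓝 t₀, HasDerivAt Y (Y' t) t) (hX₀ : X t₀ = 0) (hY₀ : Y t₀ = 0)
    (hX' : X' =O[𝓝 t₀] slope Y t₀) (hY' : Y' =O[𝓝 t₀] X) :
    ∀ᶠ t in 𝓝 t₀, X t = 0 ∧ Y t = 0 := by
  obtain ⟨A, hA, hXA⟩ := hX'.exists_pos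
  obtain ⟨B, hB, hYB⟩ := hY'.exists_pos
  have hsmall : ∀ᶠ t in 𝓝 t₀, A * B * |t - t₀| < 1 :=
    (Continuous.tendsto' (by fun_prop) t₀ 0 (by simp)).eventually_lt_const one_pos
  obtain ⟨δ, hδ, hball⟩ := nhds_basis_closedBall.eventually_iff.1
    (hX.and <| hY.and <| hXA.bound.and <| hYB.bound.and hsmall)
  have ht₀ : t₀ ∈ closedBall t₀ δ := mem_closedBall_self hδ.le
  have hconv : Convex ℝ (closedBall t₀ δ) := convex_closedBall _ _
  obtain ⟨r, hr, hmax⟩ := (isCompact_closedBall t₀ δ).exists_isMaxOn ⟨t₀, ht₀⟩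
    (f := fun t => ‖X t‖) fun t ht => (hball ht).1.continuousAt.norm.continuousWithinAt
  have hY_le : ∀ t ∈ closedBall t₀ δ, ‖Y t‖ ≤ B * ‖X r‖ * |t - t₀| := fun t ht =>
    norm_le_mul_of_norm_hasDerivAt_le hconv (fun t ht => (hball ht).2.1)
      (fun t ht => (hball ht).2.2.2.1.trans (by gcongr; exact hmax ht)) hY₀ ht₀ ht
  have hX'_le : ∀ t ∈ closedBall t₀ δ, ‖X' t‖ ≤ A * (B * ‖X r‖) := fun t ht =>
    (hball ht).2.2.1.trans (by gcongr; exact norm_slope_le hY₀ (by positivity) (hY_le t ht))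
  have hXr : ‖X r‖ = 0 := by
    have hXr_le := norm_le_mul_of_norm_hasDerivAt_le hconv (fun t ht => (hball ht).1) hX'_le
      hX₀ ht₀ hr
    nlinarith [(hball hr).2.2.2.2, norm_nonneg (X r)]
  filter_upwards [closedBall_mem_nhds t₀ hδ] with t ht
  exact ⟨norm_le_zero_iff.1 ((hmax ht).trans hXr.le),
    norm_le_zero_iff.1 ((hY_le t ht).trans (by rw [hXr, mul_zero, zero_mul]))⟩

end SingularUniqueness

section SgnPowSlope

variable {q : ℝ} {y₁ y₂ : ℝ → ℝ} {t₀ m : ℝ}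

lemma isBigO_sgnPow_sub {α : Type*} {l : Filter α} {u v : α → ℝ} {c : ℝ} (q : ℝ) (hc : c ≠ 0)
    (hu : Tendsto u l (𝓝 c)) (hv : Tendsto v l (𝓝 c)) :
    (fun a => sgnPow q (u a) - sgnPow q (v a)) =O[l] fun a => u a - v a :=
  ((contDiffAt_sgnPow q hc).hasStrictDerivAt one_ne_zero).isBigO_sub.comp_tendsto
    (hu.prodMk_nhds hv)

lemma isBigO_sgnPow_sub_slope_of_ne_zero (h₁ : ContinuousAt y₁ t₀)
    (h₂ : ContinuousAt y₂ t₀) (h₀ : y₁ t₀ = y₂ t₀) (hne : y₁ t₀ ≠ 0) :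
    (fun t => sgnPow q (y₁ t) - sgnPow q (y₂ t)) =O[𝓝 t₀] slope (y₁ - y₂) t₀ := by
  have hsub : (fun t => y₁ t - y₂ t) =O[𝓝 t₀] slope (y₁ - y₂) t₀ := by
    have hbdd : (fun t => t - t₀) =O[𝓝 t₀] fun _ => (1 : ℝ) :=
      (continuousAt_id.sub continuousAt_const).isBigO_one ℝ
    refine (hbdd.mul (isBigO_refl (slope (y₁ - y₂) t₀) _)).congr (fun t => ?_) fun t => one_mul _
    rw [← smul_eq_mul, sub_smul_slope, vsub_eq_sub, Pi.sub_apply, Pi.sub_apply, h₀, sub_self,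
      sub_zero]
  exact (isBigO_sgnPow_sub q hne h₁ (h₀ ▸ h₂)).trans hsub

/-- By homogeneity, `sgnPow q (y t) = sgnPow q (t - t₀) * sgnPow q (slope y t₀ t)`, and the slopes
stay away from the singular point `0` of `sgnPow q`. -/
lemma isBigO_sgnPow_sub_slope_of_deriv_ne_zero (hq : 0 < q) (h₁ : HasDerivAt y₁ m t₀)
    (h₂ : HasDerivAt y₂ m t₀) (hy₁ : y₁ t₀ = 0) (hy₂ : y₂ t₀ = 0) (hm : m ≠ 0) :
    (fun t => sgnPow q (y₁ t) - sgnPow q (y₂ t)) =O[𝓝 t₀] slope (y₁ - y₂) t₀ := by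
  have hfactor : ∀ {y : ℝ → ℝ}, y t₀ = 0 → ∀ t,
      sgnPow q (t - t₀) * sgnPow q (slope y t₀ t) = sgnPow q (y t) := fun {y} hy t => by
    rw [← sgnPow_mul, ← smul_eq_mul, sub_smul_slope, hy, vsub_eq_sub, sub_zero]
  have hbdd : (fun t => sgnPow q (t - t₀)) =O[𝓝[≠] t₀] fun _ => (1 : ℝ) :=
    (((continuous_sgnPow hq).comp (continuous_sub_right t₀)).continuousAt.isBigO_one ℝ).mono
      nhdsWithin_le_nhds
  have hpunctured :
      (fun t => sgnPow q (y₁ t) - sgnPow q (y₂ t)) =O[𝓝[≠] t₀] slope (y₁ - y₂) t₀ := by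
    refine (hbdd.mul (isBigO_sgnPow_sub q hm (hasDerivAt_iff_tendsto_slope.1 h₁)
      (hasDerivAt_iff_tendsto_slope.1 h₂))).congr (fun t => ?_) fun t => ?_
    · rw [mul_sub, hfactor hy₁, hfactor hy₂]
    · simp only [slope_def_field, Pi.sub_apply]
      ring
  rw [← nhdsNE_sup_pure, isBigO_sup]
  exact ⟨hpunctured, isBigO_pure.2 fun _ => by rw [hy₁, hy₂, sub_self]⟩

end SgnPowSlope

namespace IsHalfLinearSolution

variable {q : ℝ} {f g x₁ x₂ y₁ y₂ : ℝ → ℝ} {t₀ : ℝ}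

lemma eventually_eq_of_fst_ne_zero (h₁ : IsHalfLinearSolution q f g x₁ y₁)
    (h₂ : IsHalfLinearSolution q f g x₂ y₂) (hq : 0 < q) (hf : Continuous f) (hg : Continuous g)
    (hg₀ : g t₀ ≠ 0) (hx : x₁ t₀ = x₂ t₀) (hy : y₁ t₀ = y₂ t₀) (hx₀ : x₁ t₀ ≠ 0) :
    ∀ᶠ t in 𝓝 t₀, x₁ t = x₂ t ∧ y₁ t = y₂ t := by
  have hsgnPow_y : (fun t => sgnPow q⁻¹ (y₁ t) - sgnPow q⁻¹ (y₂ t)) =O[𝓝 t₀]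
      slope (y₁ - y₂) t₀ := by
    rcases eq_or_ne (y₁ t₀) 0 with hy₀ | hy₀
    · exact isBigO_sgnPow_sub_slope_of_deriv_ne_zero (inv_pos.2 hq) (h₁ t₀).2
        (hx ▸ (h₂ t₀).2) hy₀ (hy ▸ hy₀) (mul_ne_zero hg₀ (sgnPow_ne_zero hq.ne' hx₀))
    · exact isBigO_sgnPow_sub_slope_of_ne_zero h₁.continuous_snd.continuousAt
        h₂.continuous_snd.continuousAt hy hy₀
  have hsgnPow_x : (fun t => sgnPow q (x₁ t) - sgnPow q (x₂ t)) =O[𝓝 t₀] (x₁ - x₂) :=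
    isBigO_sgnPow_sub q hx₀ h₁.continuous_fst.continuousAt (hx ▸ h₂.continuous_fst.continuousAt)
  have hzero := eventually_eq_zero_of_deriv_isBigO_slope
    (.of_forall fun t => (h₁ t).1.sub (h₂ t).1) (.of_forall fun t => (h₁ t).2.sub (h₂ t).2)
    (sub_eq_zero.2 hx) (sub_eq_zero.2 hy)
    (((hf.continuousAt.isBigO_one ℝ).mul hsgnPow_y).congr (fun _ => mul_sub _ _ _)
      fun _ => one_mul _)
    (((hg.continuousAt.isBigO_one ℝ).mul hsgnPow_x).congr (fun _ => mul_sub _ _ _)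
      fun _ => one_mul _)
  exact hzero.mono fun t ht => ht.imp sub_eq_zero.1 sub_eq_zero.1

theorem eq_of_eq_at (h₁ : IsHalfLinearSolution q f g x₁ y₁)
    (h₂ : IsHalfLinearSolution q f g x₂ y₂) (hq : 0 < q) (hf : Continuous f) (hg : Continuous g)
    (hf₀ : ∀ t, f t ≠ 0) (hg₀ : ∀ t, g t ≠ 0) (hx : x₁ t₀ = x₂ t₀) (hy : y₁ t₀ = y₂ t₀)
    (h₀ : x₁ t₀ ≠ 0 ∨ y₁ t₀ ≠ 0) : x₁ = x₂ ∧ y₁ = y₂ := by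
  have hclopen : IsClopen {t | x₁ t = x₂ t ∧ y₁ t = y₂ t} := by
    refine ⟨(isClosed_eq h₁.continuous_fst h₂.continuous_fst).inter
      (isClosed_eq h₁.continuous_snd h₂.continuous_snd), isOpen_iff_mem_nhds.2 ?_⟩
    rintro t ⟨hxt, hyt⟩
    rcases h₁.ne_zero_or_ne_zero hq hf hg h₀ t with h | h
    · exact eventually_eq_of_fst_ne_zero h₁ h₂ hq hf hg (hg₀ t) hxt hyt h
    · exact (eventually_eq_of_fst_ne_zero h₁.swap h₂.swap (inv_pos.2 hq) hg hf (hf₀ t) hyt hxt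
        h).mono fun _ => And.symm
  have huniv := hclopen.eq_univ ⟨t₀, hx, hy⟩
  exact ⟨funext fun t => (huniv.ge (mem_univ t)).1, funext fun t => (huniv.ge (mem_univ t)).2⟩

end IsHalfLinearSolution

section Peano

lemma exists_tendsto_of_eventually_mem_closedBall {ι X : Type*} [PseudoMetricSpace X]
    [ProperSpace X] {U : Ultrafilter ι} {u : ι → X} {x : X} {r : ℝ}
    (hu : ∀ᶠ n in U, u n ∈ closedBall x r) : ∃ c, Tendsto u U (𝓝 c) := by
  obtain ⟨c, -, hc⟩ := (isCompact_closedBall x r).ultrafilter_le_nhds' (U.map u) hu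
  exact ⟨c, hc⟩

lemma tendsto_uncurry_of_eventually_norm_sub_le {ι F : Type*} [SeminormedAddCommGroup F]
    {l : Filter ι} {γ : ι → ℝ → F} {s : Set ℝ} {t C : ℝ} {c : F} (hs : s ∈ 𝓝 t)
    (hγ : ∀ᶠ n in l, ∀ r ∈ s, ‖γ n r - γ n t‖ ≤ C * |r - t|)
    (hlim : Tendsto (fun n => γ n t) l (𝓝 c)) :
    Tendsto (Function.uncurry γ) (l ×ˢ 𝓝 t) (𝓝 c) := by
  have hC : Tendsto (fun r => C * |r - t|) (𝓝 t) (𝓝 0) :=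
    Continuous.tendsto' (by fun_prop) t 0 (by simp)
  have hdiff : Tendsto (fun z : ι × ℝ => γ z.1 z.2 - γ z.1 t) (l ×ˢ 𝓝 t) (𝓝 0) := by
    refine squeeze_zero_norm' ?_ (hC.comp tendsto_snd)
    filter_upwards [hγ.prod_mk hs] with z hz using hz.1 z.2 hz.2
  simpa [Function.uncurry_def] using hdiff.add (hlim.comp tendsto_fst)

variable {E : Type*} [NormedAddCommGroup E] [NormedSpace ℝ E] {v : ℝ → E → E} {t₀ : ℝ}

lemma exists_forall_mem_ball_hasDerivAt_of_contDiff [FiniteDimensional ℝ E] {T C : ℝ}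
    (hv : ContDiff ℝ 1 (Function.uncurry v)) (hT : 0 ≤ T)
    (hC : ∀ t ∈ closedBall t₀ T, ∀ z, ‖v t z‖ ≤ C) (x₀ : E) :
    ∃ γ : ℝ → E, γ t₀ = x₀ ∧ ∀ t ∈ ball t₀ T, HasDerivAt γ (v t (γ t)) t := by
  rw [Real.closedBall_eq_Icc] at hC
  rw [Real.ball_eq_Ioo]
  have ht₀ : t₀ ∈ Icc (t₀ - T) (t₀ + T) := ⟨by linarith, by linarith⟩
  lift C to ℝ≥0 using (norm_nonneg _).trans (hC t₀ ht₀ 0)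
  lift T to ℝ≥0 using hT
  obtain ⟨K, hK⟩ := hv.contDiffOn.exists_lipschitzOnWith one_ne_zero
    ((convex_Icc (t₀ - T) (t₀ + T)).prod (convex_closedBall x₀ (C * T)))
    (isCompact_Icc.prod (isCompact_closedBall x₀ (C * T)))
  have hpicard : IsPicardLindelof v (⟨t₀, ht₀⟩ : Icc (t₀ - T) (t₀ + T)) x₀ (C * T) 0 C K :=
    { lipschitzOnWith := fun t ht => mul_one K ▸
        hK.comp (LipschitzWith.prodMk_left t).lipschitzOnWith fun z hz => ⟨ht, hz⟩
      continuousOn := fun z _ =>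
        (hv.continuous.comp (by fun_prop : Continuous fun t : ℝ => (t, z))).continuousOn
      norm_le := fun t ht z _ => hC t ht z
      mul_max_le := by simp }
  obtain ⟨γ, hγ₀, hγ⟩ := hpicard.exists_eq_forall_mem_Icc_hasDerivWithinAt₀
  exact ⟨γ, hγ₀, fun t ht =>
    (hγ t (Ioo_subset_Icc_self ht)).hasDerivAt (Icc_mem_nhds ht.1 ht.2)⟩

/-- `γ` is an `ε`-approximate solution on `s` of the differential equation `γ' = v t γ`, in the
sense of the Cauchy–Peano method. -/
def IsApproxIntegralCurveOn (γ : ℝ → E) (v : ℝ → E → E) (ε : ℝ) (s : Set ℝ) : Prop :=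
  ∀ t ∈ s, DifferentiableAt ℝ γ t ∧ ‖deriv γ t - v t (γ t)‖ ≤ ε

lemma exists_isApproxIntegralCurveOn_ball [FiniteDimensional ℝ E] {T C ε : ℝ}
    (hv : Continuous (Function.uncurry v)) (hT : 0 ≤ T)
    (hC : ∀ t ∈ closedBall t₀ T, ∀ z, ‖v t z‖ ≤ C) (hε : 0 < ε) (x₀ : E) :
    ∃ γ : ℝ → E, γ t₀ = x₀ ∧ IsApproxIntegralCurveOn γ v ε (ball t₀ T) := by
  obtain ⟨V, hV, hVv, -⟩ := hv.exists_contDiff_approx 1 continuous_const fun _ => hε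
  have hVv_le : ∀ t z, ‖V (t, z) - v t z‖ ≤ ε := fun t z => by
    rw [← dist_eq_norm]
    exact (hVv (t, z)).le
  obtain ⟨γ, hγ₀, hγ⟩ := exists_forall_mem_ball_hasDerivAt_of_contDiff
    (v := fun t z => V (t, z)) hV hT (fun t ht z =>
      (norm_le_norm_add_norm_sub' _ _).trans (add_le_add (hC t ht z) (hVv_le t z))) x₀
  refine ⟨γ, hγ₀, fun t ht => ⟨(hγ t ht).differentiableAt, ?_⟩⟩
  rw [(hγ t ht).deriv]
  exact hVv_le t (γ t)

lemma IsApproxIntegralCurveOn.norm_sub_le {γ : ℝ → E} {ε C : ℝ} {s : Set ℝ}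
    (hγ : IsApproxIntegralCurveOn γ v ε s) (hs : Convex ℝ s) (hC : ∀ t ∈ s, ∀ z, ‖v t z‖ ≤ C)
    {t₁ t₂ : ℝ} (ht₁ : t₁ ∈ s) (ht₂ : t₂ ∈ s) : ‖γ t₂ - γ t₁‖ ≤ (C + ε) * |t₂ - t₁| :=
  hs.norm_image_sub_le_of_norm_deriv_le (fun t ht => (hγ t ht).1)
    (fun t ht => (norm_le_norm_add_norm_sub' _ _).trans (add_le_add (hC t ht _) (hγ t ht).2))
    ht₁ ht₂

lemma hasDerivAt_of_tendsto_of_isApproxIntegralCurveOn {ι : Type*} {l : Filter ι} [l.NeBot]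
    {γ : ι → ℝ → E} {ε : ι → ℝ} {x : ℝ → E} {s : Set ℝ} {t : ℝ}
    (hv : Continuous (Function.uncurry v)) (hs : s ∈ 𝓝 t)
    (hγ : ∀ᶠ n in l, IsApproxIntegralCurveOn (γ n) v (ε n) s)
    (hε : Tendsto ε l (𝓝 0)) (hlim : ∀ r, Tendsto (fun n => γ n r) l (𝓝 (x r)))
    (hlim_t : Tendsto (Function.uncurry γ) (l ×ˢ 𝓝 t) (𝓝 (x t))) :
    HasDerivAt x (v t (x t)) t := by
  have hγs : ∀ᶠ z : ι × ℝ in l ×ˢ 𝓝 t, DifferentiableAt ℝ (γ z.1) z.2 ∧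
      ‖deriv (γ z.1) z.2 - v z.2 (γ z.1 z.2)‖ ≤ ε z.1 := by
    filter_upwards [hγ.prod_mk hs] with z hz using hz.1 z.2 hz.2
  have herror : Tendsto (fun z : ι × ℝ => deriv (γ z.1) z.2 - v z.2 (γ z.1 z.2))
      (l ×ˢ 𝓝 t) (𝓝 0) :=
    squeeze_zero_norm' (hγs.mono fun z hz => hz.2) (hε.comp tendsto_fst)
  have hfield : Tendsto (fun z : ι × ℝ => v z.2 (γ z.1 z.2)) (l ×ˢ 𝓝 t) (𝓝 (v t (x t))) :=
    (hv.tendsto (t, x t)).comp (tendsto_snd.prodMk_nhds hlim_t)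
  have hderiv : Tendsto (Function.uncurry fun n => deriv (γ n)) (l ×ˢ 𝓝 t) (𝓝 (v t (x t))) := by
    simpa [Function.uncurry_def] using herror.add hfield
  exact hasDerivAt_of_tendstoUniformlyOnFilter (f' := fun n => deriv (γ n))
    (tendsto_prod_filter_iff.1 hderiv) (hγs.mono fun z hz => hz.1.hasDerivAt) (.of_forall hlim)

/-- The `1 / (n + 1)`-approximate solutions on `ball t₀ n` are locally uniformly bounded and
Lipschitz for large `n`, and their pointwise limit along an ultrafilter is a solution. -/
theorem exists_isIntegralCurve_of_continuous [FiniteDimensional ℝ E]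
    (hv : Continuous (Function.uncurry v))
    (hbdd : ∀ T, ∃ C, ∀ t ∈ closedBall t₀ T, ∀ z, ‖v t z‖ ≤ C) (x₀ : E) :
    ∃ γ : ℝ → E, γ t₀ = x₀ ∧ IsIntegralCurve γ v := by
  choose C hC using hbdd
  choose γ hγ₀ hγ using fun n : ℕ => exists_isApproxIntegralCurveOn_ball hv n.cast_nonneg
    (hC n) (Nat.one_div_pos_of_nat (α := ℝ) (n := n)) x₀
  have hU : (hyperfilter ℕ : Filter ℕ) ≤ atTop := Nat.hyperfilter_le_atTop
  have hγ_ball : ∀ T : ℝ, ∀ᶠ n in hyperfilter ℕ,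
      IsApproxIntegralCurveOn (γ n) v (1 / ((n : ℝ) + 1)) (ball t₀ T) := fun T =>
    ((tendsto_natCast_atTop_atTop.mono_left hU).eventually_ge_atTop T).mono fun n hn t ht =>
      hγ n t (ball_subset_ball hn ht)
  have hγ_lip : ∀ T : ℝ, ∀ᶠ n in hyperfilter ℕ, ∀ s ∈ ball t₀ T, ∀ t ∈ ball t₀ T,
      ‖γ n s - γ n t‖ ≤ (C T + 1) * |s - t| := fun T => (hγ_ball T).mono fun n hn s hs t ht => by
    refine (hn.norm_sub_le (convex_ball t₀ T) (fun r hr => hC T r (ball_subset_closedBall hr))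
      ht hs).trans ?_
    gcongr
    exact div_le_one_of_le₀ (by simp) (by positivity)
  have ht_mem : ∀ t, t ∈ ball t₀ (|t - t₀| + 1) := fun t => by simp [Real.dist_eq]
  have hlim : ∀ t, ∃ c, Tendsto (fun n => γ n t) (hyperfilter ℕ) (𝓝 c) := fun t =>
    exists_tendsto_of_eventually_mem_closedBall (x := x₀) <| (hγ_lip _).mono fun n hn => by
      simpa only [mem_closedBall, hγ₀, ← dist_eq_norm] using
        hn t (ht_mem t) t₀ (mem_ball_self (by positivity))
  choose x hx using hlim
  refine ⟨x, tendsto_nhds_unique (hx t₀) (by simp only [hγ₀, tendsto_const_nhds]), fun t => ?_⟩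
  have hnhds : ball t₀ (|t - t₀| + 1) ∈ 𝓝 t := isOpen_ball.mem_nhds (ht_mem t)
  exact hasDerivAt_of_tendsto_of_isApproxIntegralCurveOn hv hnhds (hγ_ball _)
    (tendsto_one_div_add_atTop_nhds_zero_nat.mono_left hU) hx
    (tendsto_uncurry_of_eventually_norm_sub_le hnhds
      ((hγ_lip _).mono fun n hn r hr => hn r hr t (ht_mem t)) (hx t))

end Peano

section HalfLinearExistence

variable {q : ℝ} {f g : ℝ → ℝ}

/-- The projection of `x` onto the interval `[-R, R]`, used to make a vector field bounded. -/
def clip (R x : ℝ) : ℝ := max (-R) (min R x)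

lemma abs_clip_le {R : ℝ} (hR : 0 ≤ R) (x : ℝ) : |clip R x| ≤ R :=
  abs_le.2 ⟨le_max_left _ _, max_le (neg_le_self hR) (min_le_left _ _)⟩

lemma abs_clip_le_abs {R : ℝ} (hR : 0 ≤ R) (x : ℝ) : |clip R x| ≤ |x| := by
  refine abs_le.2 ⟨?_, max_le ((neg_nonpos.2 hR).trans (abs_nonneg x))
    ((min_le_right _ _).trans (le_abs_self x))⟩
  exact (le_min ((neg_nonpos.2 (abs_nonneg x)).trans hR) (neg_abs_le x)).trans (le_max_right _ _)

lemma clip_of_abs_le {R x : ℝ} (hx : |x| ≤ R) : clip R x = x := by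
  rw [clip, min_eq_right (abs_le.1 hx).2, max_eq_right (abs_le.1 hx).1]

/-- The vector field of the half-linear system, with the states clipped to `[-R t, R t]`. -/
noncomputable def clippedHalfLinearField (q : ℝ) (f g R : ℝ → ℝ) (t : ℝ) (z : ℝ × ℝ) : ℝ × ℝ :=
  (f t * sgnPow q⁻¹ (clip (R t) z.2), g t * sgnPow q (clip (R t) z.1))

lemma continuous_uncurry_clippedHalfLinearField {R : ℝ → ℝ} (hq : 0 < q) (hf : Continuous f)
    (hg : Continuous g) (hR : Continuous R) :
    Continuous (Function.uncurry (clippedHalfLinearField q f g R)) := by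
  have hfst := (continuous_sgnPow hq).comp (f := fun u : ℝ × ℝ × ℝ => clip (R u.1) u.2.1) (by
    unfold clip
    fun_prop)
  have hsnd := (continuous_sgnPow (inv_pos.2 hq)).comp
    (f := fun u : ℝ × ℝ × ℝ => clip (R u.1) u.2.2) (by
      unfold clip
      fun_prop)
  exact ((hf.comp continuous_fst).mul hsnd).prodMk ((hg.comp continuous_fst).mul hfst)

lemma norm_clippedHalfLinearField_le {R : ℝ → ℝ} (hq : 0 < q) {t : ℝ} (hR : 0 ≤ R t)
    (z : ℝ × ℝ) :
    ‖clippedHalfLinearField q f g R t z‖ ≤ |f t| * R t ^ q⁻¹ + |g t| * R t ^ q := by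
  have hfst : |f t * sgnPow q⁻¹ (clip (R t) z.2)| ≤ |f t| * R t ^ q⁻¹ :=
    abs_mul_sgnPow_le (inv_pos.2 hq) (abs_clip_le hR z.2) (f t)
  have hsnd : |g t * sgnPow q (clip (R t) z.1)| ≤ |g t| * R t ^ q :=
    abs_mul_sgnPow_le hq (abs_clip_le hR z.1) (g t)
  exact norm_prod_le_iff.2 ⟨hfst.trans (le_add_of_nonneg_right (by positivity)),
    hsnd.trans (le_add_of_nonneg_left (by positivity))⟩

lemma exists_isIntegralCurve_clippedHalfLinearField {R : ℝ → ℝ} (hq : 0 < q) (hf : Continuous f)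
    (hg : Continuous g) (hR : Continuous R) (hR₀ : ∀ t, 0 ≤ R t) (t₀ : ℝ) (z₀ : ℝ × ℝ) :
    ∃ γ : ℝ → ℝ × ℝ, γ t₀ = z₀ ∧ IsIntegralCurve γ (clippedHalfLinearField q f g R) := by
  refine exists_isIntegralCurve_of_continuous
    (continuous_uncurry_clippedHalfLinearField hq hf hg hR) (fun T => ?_) z₀
  have hcont : Continuous fun t => |f t| * R t ^ q⁻¹ + |g t| * R t ^ q :=
    (hf.abs.mul (hR.rpow_const fun _ => .inr (inv_pos.2 hq).le)).add
      (hg.abs.mul (hR.rpow_const fun _ => .inr hq.le))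
  obtain ⟨C, hC⟩ := (isCompact_closedBall t₀ T).exists_bound_of_continuousOn hcont.continuousOn
  exact ⟨C, fun t ht z => (norm_clippedHalfLinearField_le hq (hR₀ t) z).trans
    ((le_abs_self _).trans (hC t ht))⟩

/-- The energy estimate applies to the clipped system as well, and shows that its solution never
reaches the clipping level. -/
theorem exists_isHalfLinearSolution (hq : 0 < q) (hf : Continuous f) (hg : Continuous g)
    (t₀ x₀ y₀ : ℝ) : ∃ x y, IsHalfLinearSolution q f g x y ∧ x t₀ = x₀ ∧ y t₀ = y₀ := by
  let R : ℝ → ℝ := fun t => 1 + halfLinearGrowth q f g t₀ t * halfLinearEnergy q x₀ y₀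
  have hR : Continuous R :=
    continuous_const.add ((continuous_halfLinearGrowth hf hg q t₀).mul continuous_const)
  have hR₀ : ∀ t, 0 ≤ R t := fun t =>
    add_nonneg zero_le_one (mul_nonneg (Real.exp_pos _).le (halfLinearEnergy_nonneg _ _ _))
  obtain ⟨γ, hγ₀, hγ⟩ := exists_isIntegralCurve_clippedHalfLinearField hq hf hg hR hR₀ t₀ (x₀, y₀)
  have hx : ∀ t, HasDerivAt (fun t => (γ t).1) (f t * sgnPow q⁻¹ (clip (R t) (γ t).2)) t :=
    fun t => (hγ t).fst
  have hy : ∀ t, HasDerivAt (fun t => (γ t).2) (g t * sgnPow q (clip (R t) (γ t).1)) t :=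
    fun t => (hγ t).snd
  have henergy : ∀ t, 1 + halfLinearEnergy q (γ t).1 (γ t).2 ≤ R t := fun t => by
    have hle := halfLinearEnergy_le hq hf hg hx hy
      (fun t => abs_mul_sgnPow_le (inv_pos.2 hq) (abs_clip_le_abs (hR₀ t) _) (f t))
      (fun t => abs_mul_sgnPow_le hq (abs_clip_le_abs (hR₀ t) _) (g t)) t₀ t
    rw [hγ₀] at hle
    exact add_le_add_right hle 1
  refine ⟨fun t => (γ t).1, fun t => (γ t).2, fun t => ⟨?_, ?_⟩, congrArg Prod.fst hγ₀,
    congrArg Prod.snd hγ₀⟩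
  · dsimp only
    rw [← clip_of_abs_le ((abs_snd_le_one_add_halfLinearEnergy hq _ _).trans (henergy t))]
    exact hx t
  · dsimp only
    rw [← clip_of_abs_le ((abs_fst_le_one_add_halfLinearEnergy hq _ _).trans (henergy t))]
    exact hy t

end HalfLinearExistence

section ModelSolution

variable {p lam κ a : ℝ} {w y : ℝ → ℝ}

/-- The weight `ρ(t) = e^{-κ t²/2}` of the model equation. -/
noncomputable def modelWeight (κ t : ℝ) : ℝ := Real.exp (-κ * t ^ 2 / 2)

lemma modelWeight_ne_zero (κ t : ℝ) : modelWeight κ t ≠ 0 := Real.exp_ne_zero _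

lemma contDiff_modelWeight (κ : ℝ) : ContDiff ℝ 1 (modelWeight κ) := by
  unfold modelWeight
  fun_prop

/-- `(w, y)` solves the half-linear system which is the model equation written as
`y = ρ |w'|^{p-2} w'`, `y' = -λ ρ |w|^{p-2} w`. -/
def IsModelFlow (p lam κ : ℝ) (w y : ℝ → ℝ) : Prop :=
  IsHalfLinearSolution (p - 1) (fun t => sgnPow (p - 1)⁻¹ (modelWeight κ t)⁻¹)
    (fun t => -lam * modelWeight κ t) w y

lemma IsModelSolution.isModelFlow (hp : 1 < p) (hw : IsModelSolution p lam κ a w) :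
    IsModelFlow p lam κ w fun t => modelWeight κ t * sgnPow (p - 1) (deriv w t) := by
  have hq : (p - 1)⁻¹ ≠ 0 := inv_ne_zero (sub_pos.2 hp).ne'
  have hinv : ∀ x, sgnPow (p - 1)⁻¹ (sgnPow (p - 1) x) = x := by
    simpa only [inv_inv] using sgnPow_sgnPow_inv hq
  refine fun t => ⟨?_, ?_⟩
  · rw [← sgnPow_mul, inv_mul_cancel_left₀ (modelWeight_ne_zero κ t), hinv]
    exact (hw.1.differentiable one_ne_zero t).hasDerivAt
  · rw [mul_assoc]
    exact hw.2.2.1 t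

lemma IsModelFlow.deriv_fst (h : IsModelFlow p lam κ w y) :
    deriv w = fun t => sgnPow (p - 1)⁻¹ ((modelWeight κ t)⁻¹ * y t) :=
  funext fun t => by rw [(h t).1.deriv, sgnPow_mul]

lemma IsModelFlow.isModelSolution (hp : 1 < p) (h : IsModelFlow p lam κ w y) (hw : w a = -1)
    (hy : y a = 0) : IsModelSolution p lam κ a w := by
  have hq : 0 < p - 1 := sub_pos.2 hp
  have hρ : ContDiff ℝ 1 fun t => (modelWeight κ t)⁻¹ :=
    (contDiff_modelWeight κ).inv (modelWeight_ne_zero κ)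
  have hpow : ∀ t, sgnPow (p - 1) (deriv w t) = (modelWeight κ t)⁻¹ * y t := fun t => by
    rw [h.deriv_fst, sgnPow_sgnPow_inv hq.ne']
  have hflux : ∀ t, modelWeight κ t * sgnPow (p - 1) (deriv w t) = y t := fun t => by
    rw [hpow, mul_inv_cancel_left₀ (modelWeight_ne_zero κ t)]
  have hw_contDiff : ContDiff ℝ 1 w := by
    refine contDiff_one_iff_deriv.2 ⟨fun t => (h t).1.differentiableAt, ?_⟩
    rw [h.deriv_fst]
    exact (continuous_sgnPow (inv_pos.2 hq)).comp (hρ.continuous.mul h.continuous_snd)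
  have hy_contDiff : ContDiff ℝ 1 y := by
    refine contDiff_one_iff_deriv.2 ⟨fun t => (h t).2.differentiableAt, ?_⟩
    rw [funext fun t => (h t).2.deriv]
    exact (continuous_const.mul (contDiff_modelWeight κ).continuous).mul
      ((continuous_sgnPow hq).comp h.continuous_fst)
  refine ⟨hw_contDiff, ?_, fun t => ?_, hw, ?_⟩
  · simpa only [hpow] using hρ.mul hy_contDiff
  · have hy' := (h t).2
    rw [← funext hflux, mul_assoc] at hy'
    exact hy'
  · simp only [h.deriv_fst, hy, mul_zero, sgnPow_zero]

end ModelSolution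

theorem existsUnique_modelSolution_general (p lam κ a : ℝ) (hp : 1 < p) (hlam : lam ≠ 0) :
    ∃! w : ℝ → ℝ, IsModelSolution p lam κ a w := by
  have hq : 0 < p - 1 := sub_pos.2 hp
  have hρ : Continuous (modelWeight κ) := (contDiff_modelWeight κ).continuous
  have hf : Continuous fun t => sgnPow (p - 1)⁻¹ (modelWeight κ t)⁻¹ :=
    (continuous_sgnPow (inv_pos.2 hq)).comp (hρ.inv₀ (modelWeight_ne_zero κ))
  have hg : Continuous fun t => -lam * modelWeight κ t := hρ.const_mul _
  have hf₀ : ∀ t, sgnPow (p - 1)⁻¹ (modelWeight κ t)⁻¹ ≠ 0 := fun t =>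
    sgnPow_ne_zero (inv_ne_zero hq.ne') (inv_ne_zero (modelWeight_ne_zero κ t))
  have hg₀ : ∀ t, -lam * modelWeight κ t ≠ 0 := fun t =>
    mul_ne_zero (neg_ne_zero.2 hlam) (modelWeight_ne_zero κ t)
  obtain ⟨w, y, hwy, hw, hy⟩ := exists_isHalfLinearSolution hq hf hg a (-1) 0
  refine ⟨w, IsModelFlow.isModelSolution hp hwy hw hy, fun v hv => ?_⟩
  have ⟨_, _, _, hva, hv'a⟩ := hv
  exact (IsHalfLinearSolution.eq_of_eq_at (hv.isModelFlow hp) hwy hq hf hg hf₀ hg₀ (t₀ := a)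
    (by rw [hva, hw]) (by rw [hv'a, hy, sgnPow_zero, mul_zero]) (.inl (by norm_num [hva]))).1

/-- **Existence and uniqueness for the one-dimensional model IVP.**
Fix `1 < p < ∞`, `λ > 0`, `κ ≤ 0`, `a ∈ ℝ`. Then there is exactly one `w : ℝ → ℝ`
solving the model IVP with data `w a = -1`, `w' a = 0`. -/
theorem existsUnique_modelSolution (p lam κ a : ℝ)
    (hp : 1 < p) (hlam : 0 < lam) (hκ : κ ≤ 0) :
    ∃! w : ℝ → ℝ, IsModelSolution p lam κ a w :=
  existsUnique_modelSolution_general p lam κ a hp hlam.ne'
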